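/- arXiv:2310.16592 — 2 statements merged into one kernel-verified Lean document; each statement's English description precedes it below -/
import Mathlib

section
/- (Lemma 3, mean-squared error of the over-the-air aggregated gradient.) In the single-round over-the-air aggregation model, E[‖v/(m_h·N) − g‖²] ≤ σ̄²/(m_h²·N²) + σ_h²·V²/(M·N·m_h²) + ((M·(σ_h² − m_h²) − σ_h²)/(M·N·m_h²))·‖g‖². -/
open MeasureTheory ProbabilityTheory

/-- The family `{h_i}_i ∪ {X_{i,m}}_{i,m} ∪ {n}` combined into a single family of random
variables with common codomain `ℝ × ℝ^d`; each member generates exactly the σ-algebra of the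
corresponding original random variable, so mutual independence of this family is equivalent to
mutual independence of the original family. -/
def otaFam {d N M : ℕ} {Ω : Type*}
    (h : Fin N → Ω → ℝ) (X : Fin N → Fin M → Ω → EuclideanSpace ℝ (Fin d))
    (n : Ω → EuclideanSpace ℝ (Fin d)) :
    Fin N ⊕ (Fin N × Fin M) ⊕ Unit → Ω → ℝ × EuclideanSpace ℝ (Fin d)
  | Sum.inl i => fun ω => (h i ω, 0)
  | Sum.inr (Sum.inl (i, m)) => fun ω => (0, X i m ω)
  | Sum.inr (Sum.inr _) => fun ω => (0, n ω)

lemma ota_inner_indep {d : ℕ} {Ω : Type*} [MeasurableSpace Ω] {μ : Measure Ω}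
    [IsProbabilityMeasure μ] {Y Z : Ω → EuclideanSpace ℝ (Fin d)}
    (hY : MemLp Y 2 μ) (hZ : MemLp Z 2 μ) (hYZ : IndepFun Y Z μ) :
    ∫ ω, inner ℝ (Y ω) (Z ω) ∂μ = inner ℝ (∫ ω, Y ω ∂μ) (∫ ω, Z ω ∂μ) :=
  hYZ.integral_bilin (hY.integrable (by norm_num)) (hZ.integrable (by norm_num)) (innerSL ℝ)

lemma ota_sum_sq {d : ℕ} {Ω : Type*} [MeasurableSpace Ω] {μ : Measure Ω}
    [IsProbabilityMeasure μ] {ι : Type*} [Fintype ι]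
    (Y : ι → Ω → EuclideanSpace ℝ (Fin d)) (a : ι → EuclideanSpace ℝ (Fin d))
    (hY : ∀ i, MemLp (Y i) 2 μ) (hEY : ∀ i, ∫ ω, Y i ω ∂μ = a i)
    (hind : ∀ i j, i ≠ j → IndepFun (Y i) (Y j) μ) :
    ∫ ω, ‖∑ i, Y i ω‖ ^ 2 ∂μ
      = ∑ i, (∫ ω, ‖Y i ω‖ ^ 2 ∂μ - ‖a i‖ ^ 2) + ‖∑ i, a i‖ ^ 2 := by
  classical
  have hint : ∀ i j, Integrable (fun ω => inner ℝ (Y i ω) (Y j ω)) μ :=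
    fun i j => by
      refine Integrable.mono' (((hY i).norm.integrable_mul (hY j).norm))
        ((hY i).1.inner (hY j).1) (Filter.Eventually.of_forall fun ω => ?_)
      exact norm_inner_le_norm _ _
  simp_rw [← real_inner_self_eq_norm_sq, sum_inner, inner_sum]
  rw [integral_finsetSum _ (fun i _ => integrable_finsetSum _ (fun j _ => hint i j))]
  rw [← Finset.sum_add_distrib]
  refine Finset.sum_congr rfl fun i _ => ?_
  rw [integral_finsetSum _ (fun j _ => hint i j)]
  have : ∀ j, ∫ ω, inner ℝ (Y i ω) (Y j ω) ∂μ = inner ℝ (a i) (a j) +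
      if i = j then (∫ ω, inner ℝ (Y i ω) (Y i ω) ∂μ - inner ℝ (a i) (a i)) else 0 := by
    intro j
    split_ifs with hij
    · subst hij; ring
    · rw [ota_inner_indep (hY i) (hY j) (hind i j hij), hEY, hEY, add_zero]
  rw [Finset.sum_congr rfl (fun j _ => this j), Finset.sum_add_distrib, Finset.sum_ite_eq,
    if_pos (Finset.mem_univ i), add_comm]

lemma ota_centered {d : ℕ} {Ω : Type*} [MeasurableSpace Ω] {μ : Measure Ω}
    [IsProbabilityMeasure μ]
    (Y : Ω → EuclideanSpace ℝ (Fin d)) (a : EuclideanSpace ℝ (Fin d))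
    (hY : MemLp Y 2 μ) (hEY : ∫ ω, Y ω ∂μ = a) :
    ∫ ω, ‖Y ω - a‖ ^ 2 ∂μ = ∫ ω, ‖Y ω‖ ^ 2 ∂μ - ‖a‖ ^ 2 := by
  have h1 : Integrable (fun ω => ‖Y ω‖ ^ 2) μ := hY.integrable_norm_pow (by norm_num)
  have hYi : Integrable Y μ := hY.integrable (by norm_num)
  have h2 : Integrable (fun ω => 2 * inner ℝ (Y ω) a) μ :=
    (hYi.inner_const a).const_mul 2
  simp_rw [norm_sub_sq_real]
  rw [integral_add (f := fun ω => ‖Y ω‖ ^ 2 - 2 * inner ℝ (Y ω) a) (h1.sub h2)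
    (integrable_const _), integral_sub h1 h2, integral_const_mul]
  have : ∫ ω, inner ℝ (Y ω) a ∂μ = ‖a‖ ^ 2 := by
    simp_rw [real_inner_comm a]
    rw [integral_inner hYi, hEY, real_inner_self_eq_norm_sq]
  rw [this]; simp; ring

lemma ota_smul {d : ℕ} {Ω : Type*} [MeasurableSpace Ω] {μ : Measure Ω}
    [IsProbabilityMeasure μ] {h : Ω → ℝ} {Y : Ω → EuclideanSpace ℝ (Fin d)}
    (hh : MemLp h 2 μ) (hY : MemLp Y 2 μ) (hind : IndepFun h Y μ) :
    MemLp (fun ω => h ω • Y ω) 2 μ ∧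
    ∫ ω, ‖h ω • Y ω‖ ^ 2 ∂μ = (∫ ω, h ω ^ 2 ∂μ) * ∫ ω, ‖Y ω‖ ^ 2 ∂μ := by
  have hi2 : IndepFun (fun ω => h ω ^ 2) (fun ω => ‖Y ω‖ ^ 2) μ :=
    hind.comp (φ := fun x : ℝ => x ^ 2) (ψ := fun y : EuclideanSpace ℝ (Fin d) => ‖y‖ ^ 2)
      (by fun_prop) (by fun_prop)
  have h1 : Integrable (fun ω => h ω ^ 2) μ := hh.integrable_sq
  have h2 : Integrable (fun ω => ‖Y ω‖ ^ 2) μ := hY.integrable_norm_pow (by norm_num)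
  have e : ∀ ω, ‖h ω • Y ω‖ ^ 2 = h ω ^ 2 * ‖Y ω‖ ^ 2 := fun ω => by
    rw [norm_smul, mul_pow, Real.norm_eq_abs, sq_abs]
  constructor
  · refine (memLp_two_iff_integrable_sq_norm (hh.1.smul hY.1)).2 ?_
    simp only [Pi.smul_apply', smul_eq_mul]
    simp_rw [e]
    exact hi2.integrable_mul h1 h2
  · simp_rw [e]
    exact hi2.integral_fun_mul_eq_mul_integral h1.1 h2.1

/-- Which agent (if any) a member of the family belongs to. -/
def otaOwner {N M : ℕ} : Fin N ⊕ (Fin N × Fin M) ⊕ Unit → Option (Fin N)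
  | Sum.inl i => some i
  | Sum.inr (Sum.inl (i, _)) => some i
  | Sum.inr (Sum.inr _) => none

/-- The per-agent contributions, with the noise as the `none` entry. -/
noncomputable def otaY {d N M : ℕ} {Ω : Type*}
    (h : Fin N → Ω → ℝ) (X : Fin N → Fin M → Ω → EuclideanSpace ℝ (Fin d))
    (n : Ω → EuclideanSpace ℝ (Fin d)) : Option (Fin N) → Ω → EuclideanSpace ℝ (Fin d)
  | none => n
  | some i => fun ω => h i ω • ((1 / (M : ℝ)) • ∑ m : Fin M, X i m ω)

lemma otaFam_aemeas {d N M : ℕ} {Ω : Type*} [MeasurableSpace Ω] {μ : Measure Ω}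
    {h : Fin N → Ω → ℝ} {X : Fin N → Fin M → Ω → EuclideanSpace ℝ (Fin d)}
    {n : Ω → EuclideanSpace ℝ (Fin d)}
    (hh2 : ∀ i, MemLp (h i) 2 μ) (hX2 : ∀ i m, MemLp (X i m) 2 μ)
    (hn2 : MemLp n 2 μ) (k) : AEMeasurable (otaFam h X n k) μ := by
  rcases k with i | ⟨i, m⟩ | u
  · exact (hh2 i).1.aemeasurable.prodMk aemeasurable_const
  · exact aemeasurable_const.prodMk (hX2 i m).1.aemeasurable
  · exact aemeasurable_const.prodMk hn2.1.aemeasurable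

lemma otaY_indep {d N M : ℕ} {Ω : Type*} [MeasurableSpace Ω] {μ : Measure Ω}
    [IsProbabilityMeasure μ]
    {h : Fin N → Ω → ℝ} {X : Fin N → Fin M → Ω → EuclideanSpace ℝ (Fin d)}
    {n : Ω → EuclideanSpace ℝ (Fin d)}
    (hm : ∀ k, AEMeasurable (otaFam h X n k) μ)
    (hind : iIndepFun (otaFam h X n) μ) (k l : Option (Fin N)) (hkl : k ≠ l) :
    IndepFun (otaY h X n k) (otaY h X n l) μ := by
  classical
  let S : Option (Fin N) → Finset (Fin N ⊕ (Fin N × Fin M) ⊕ Unit) :=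
    fun k => Finset.univ.filter (fun j => otaOwner j = k)
  have key : ∀ k, ∃ φ : (S k → ℝ × EuclideanSpace ℝ (Fin d)) → EuclideanSpace ℝ (Fin d),
      Measurable φ ∧ otaY h X n k = φ ∘ (fun a (i : S k) => otaFam h X n i a) := by
    rintro (_ | i)
    · refine ⟨fun z => (z ⟨Sum.inr (Sum.inr ()), Finset.mem_filter.2 ⟨Finset.mem_univ _, rfl⟩⟩).2, by fun_prop, ?_⟩
      funext ω; simp [otaY, otaFam]
    · refine ⟨fun z => (z ⟨Sum.inl i, Finset.mem_filter.2 ⟨Finset.mem_univ _, rfl⟩⟩).1 • ((1 / (M : ℝ)) •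
        ∑ m : Fin M, (z ⟨Sum.inr (Sum.inl (i, m)), Finset.mem_filter.2 ⟨Finset.mem_univ _, rfl⟩⟩).2), by fun_prop, ?_⟩
      funext ω; simp [otaY, otaFam]
  obtain ⟨φ, hφ, e1⟩ := key k
  obtain ⟨ψ, hψ, e2⟩ := key l
  rw [e1, e2]
  refine (hind.indepFun_finset₀ (S k) (S l) ?_ hm).comp hφ hψ
  rw [Finset.disjoint_left]
  intro j hj hj'
  simp only [S, Finset.mem_filter, Finset.mem_univ, true_and] at hj hj'
  exact hkl (hj.symm.trans hj')

lemma ota_hX_indep {d N M : ℕ} {Ω : Type*} [MeasurableSpace Ω] {μ : Measure Ω}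
    [IsProbabilityMeasure μ]
    {h : Fin N → Ω → ℝ} {X : Fin N → Fin M → Ω → EuclideanSpace ℝ (Fin d)}
    {n : Ω → EuclideanSpace ℝ (Fin d)}
    (hm : ∀ k, AEMeasurable (otaFam h X n k) μ)
    (hind : iIndepFun (otaFam h X n) μ) (i : Fin N) :
    IndepFun (h i) (fun ω => (1 / (M : ℝ)) • ∑ m : Fin M, X i m ω) μ := by
  classical
  let T : Finset (Fin N ⊕ (Fin N × Fin M) ⊕ Unit) :=
    Finset.univ.image (fun m : Fin M => Sum.inr (Sum.inl (i, m)))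
  let S : Finset (Fin N ⊕ (Fin N × Fin M) ⊕ Unit) := {Sum.inl i}
  have := hind.indepFun_finset₀ S T (by simp [S, T]) hm
  exact this.comp (φ := fun z : S → ℝ × EuclideanSpace ℝ (Fin d) =>
      (z ⟨Sum.inl i, Finset.mem_singleton_self _⟩).1)
    (ψ := fun z : T → ℝ × EuclideanSpace ℝ (Fin d) => (1 / (M : ℝ)) •
        ∑ m : Fin M, (z ⟨Sum.inr (Sum.inl (i, m)), Finset.mem_image_of_mem _ (Finset.mem_univ m)⟩).2) (by fun_prop) (by fun_prop)


/-- Lemma 3 of the paper: mean-squared error of the over-the-air aggregated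
gradient.  In the single-round over-the-air aggregation model with received signal
`v = Σ_{i=1}^N h_i • ((1/M) Σ_{m=1}^M X_{i,m}) + n`,
`E[‖v/(m_h N) - g‖²] ≤ σ̄²/(m_h² N²) + σ_h² V²/(M N m_h²)
  + ((M(σ_h² - m_h²) - σ_h²)/(M N m_h²)) ‖g‖²`. -/
theorem overTheAir_mse_bound
    {d : ℕ} (hd : 1 ≤ d) {N M : ℕ} (hN : 0 < N) (hM : 0 < M)
    {Ω : Type*} [MeasurableSpace Ω] (μ : Measure Ω) [IsProbabilityMeasure μ]
    (m_h σ_h2 V σbar2 : ℝ) (hm : 0 < m_h) (hσh : 0 ≤ σ_h2) (hV : 0 ≤ V)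
    (hσbar : 0 ≤ σbar2)
    (h : Fin N → Ω → ℝ) (X : Fin N → Fin M → Ω → EuclideanSpace ℝ (Fin d))
    (n : Ω → EuclideanSpace ℝ (Fin d))
    (hh2 : ∀ i, MemLp (h i) 2 μ) (hX2 : ∀ i m, MemLp (X i m) 2 μ)
    (hn2 : MemLp n 2 μ)
    (hind : iIndepFun (otaFam h X n) μ)
    (hEh : ∀ i, ∫ ω, h i ω ∂μ = m_h) (hEh2 : ∀ i, ∫ ω, (h i ω) ^ 2 ∂μ = σ_h2)
    (g : EuclideanSpace ℝ (Fin d))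
    (hEX : ∀ i m, ∫ ω, X i m ω ∂μ = g)
    (hVX : ∀ i m, ∫ ω, ‖X i m ω‖ ^ 2 ∂μ ≤ V ^ 2)
    (hEn : ∫ ω, n ω ∂μ = 0) (hVn : ∫ ω, ‖n ω‖ ^ 2 ∂μ ≤ σbar2)
    (v : Ω → EuclideanSpace ℝ (Fin d))
    (hv : v = fun ω =>
      (∑ i : Fin N, h i ω • ((1 / (M : ℝ)) • ∑ m : Fin M, X i m ω)) + n ω) :
    ∫ ω, ‖(1 / (m_h * (N : ℝ))) • v ω - g‖ ^ 2 ∂μ ≤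
      σbar2 / (m_h ^ 2 * (N : ℝ) ^ 2)
        + σ_h2 * V ^ 2 / ((M : ℝ) * (N : ℝ) * m_h ^ 2)
        + (((M : ℝ) * (σ_h2 - m_h ^ 2) - σ_h2) / ((M : ℝ) * (N : ℝ) * m_h ^ 2))
            * ‖g‖ ^ 2 := by
  have hmeas := otaFam_aemeas hh2 hX2 hn2
  have hM0 : (0 : ℝ) < M := by exact_mod_cast hM
  have hN0 : (0 : ℝ) < N := by exact_mod_cast hN
  let A : Fin N → Ω → EuclideanSpace ℝ (Fin d) :=
    fun i ω => (1 / (M : ℝ)) • ∑ m : Fin M, X i m ω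
  have hA : ∀ i, MemLp (A i) 2 μ := fun i =>
    (memLp_finsetSum Finset.univ (fun m _ => hX2 i m)).const_smul (1 / (M : ℝ))
  have hEA : ∀ i, ∫ ω, A i ω ∂μ = g := by
    intro i
    simp only [A]
    rw [integral_smul, integral_finsetSum _ (fun m _ => (hX2 i m).integrable (by norm_num))]
    simp only [hEX, Finset.sum_const, Finset.card_univ, Fintype.card_fin]
    rw [← Nat.cast_smul_eq_nsmul ℝ, smul_smul, one_div, inv_mul_cancel₀ hM0.ne', one_smul]
  have hXX : ∀ i m m', m ≠ m' → IndepFun (X i m) (X i m') μ := by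
    intro i m m' hne
    have := hind.indepFun (i := Sum.inr (Sum.inl (i, m))) (j := Sum.inr (Sum.inl (i, m')))
      (by simpa using hne)
    exact this.comp measurable_snd measurable_snd
  have hVA : ∀ i, ∫ ω, ‖A i ω‖ ^ 2 ∂μ ≤ (V ^ 2 - ‖g‖ ^ 2) / M + ‖g‖ ^ 2 := by
    intro i
    have h1 := ota_sum_sq (X i) (fun _ => g) (hX2 i) (hEX i) (hXX i)
    have h2 : ∑ m, (∫ ω, ‖X i m ω‖ ^ 2 ∂μ - ‖g‖ ^ 2) ≤ ∑ m : Fin M, (V ^ 2 - ‖g‖ ^ 2) :=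
      Finset.sum_le_sum fun m _ => by linarith [hVX i m]
    have h3 : ‖∑ m : Fin M, g‖ ^ 2 = M ^ 2 * ‖g‖ ^ 2 := by
      simp only [Finset.sum_const, Finset.card_univ, Fintype.card_fin]
      rw [← Nat.cast_smul_eq_nsmul ℝ, norm_smul, mul_pow]; simp
    rw [h3] at h1
    have h4 : ∑ m : Fin M, (V ^ 2 - ‖g‖ ^ 2) = M * (V ^ 2 - ‖g‖ ^ 2) := by
      rw [Finset.sum_const, Finset.card_univ, Fintype.card_fin, nsmul_eq_mul]
    have e : ∀ ω, ‖A i ω‖ ^ 2 = (1 / (M : ℝ)) ^ 2 * ‖∑ m, X i m ω‖ ^ 2 := fun ω => by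
      simp only [A]
      rw [norm_smul, mul_pow, Real.norm_eq_abs, sq_abs]
    simp_rw [e]
    rw [integral_const_mul, h1]
    calc _ ≤ (1 / (M : ℝ)) ^ 2 * (M * (V ^ 2 - ‖g‖ ^ 2) + M ^ 2 * ‖g‖ ^ 2) := by
          rw [← h4]; gcongr
      _ = _ := by field_simp
  have hW : ∀ i, _ := fun i => ota_smul (hh2 i) (hA i) (ota_hX_indep hmeas hind i)
  have hEW : ∀ i, ∫ ω, h i ω • A i ω ∂μ = m_h • g := fun i => by
    rw [(ota_hX_indep hmeas hind i).integral_fun_smul_eq_smul_integral (hh2 i).1 (hA i).1,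
      hEh]
    exact congrArg _ (hEA i)
  let a : Option (Fin N) → EuclideanSpace ℝ (Fin d) := fun o => o.elim 0 (fun _ => m_h • g)
  have hYL : ∀ k, MemLp (otaY h X n k) 2 μ := by
    rintro (_ | i)
    · exact hn2
    · exact (hW i).1
  have hYE : ∀ k, ∫ ω, otaY h X n k ω ∂μ = a k := by
    rintro (_ | i)
    · exact hEn
    · exact hEW i
  have hvY : ∀ ω, v ω = ∑ k, otaY h X n k ω := fun ω => by
    rw [hv, Fintype.sum_option]; simp only [otaY]; rw [add_comm]
  have hsa : ∑ k, a k = (m_h * N) • g := by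
    rw [Fintype.sum_option]
    simp only [a, Option.elim, Finset.sum_const, Finset.card_univ, Fintype.card_fin, zero_add]
    rw [← Nat.cast_smul_eq_nsmul ℝ, smul_smul, mul_comm]
  have hvL : MemLp v 2 μ := by
    rw [show v = fun ω => ∑ k, otaY h X n k ω from funext hvY]
    exact memLp_finsetSum _ (fun k _ => hYL k)
  have hvE : ∫ ω, v ω ∂μ = (m_h * N) • g := by
    simp_rw [hvY]
    rw [integral_finsetSum _ (fun k _ => (hYL k).integrable (by norm_num)), ← hsa]
    exact Finset.sum_congr rfl fun k _ => hYE k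
  have hsum := ota_sum_sq (otaY h X n) a hYL hYE (otaY_indep hmeas hind)
  simp_rw [← hvY] at hsum
  have hcen := ota_centered v _ hvL hvE
  rw [hsum, hsa, add_sub_cancel_right, Fintype.sum_option] at hcen
  have hb : ∀ i, ∫ ω, ‖otaY h X n (some i) ω‖ ^ 2 ∂μ - ‖a (some i)‖ ^ 2 ≤
      σ_h2 * ((V ^ 2 - ‖g‖ ^ 2) / M + ‖g‖ ^ 2) - m_h ^ 2 * ‖g‖ ^ 2 := by
    intro i
    have h1 : ∫ ω, ‖otaY h X n (some i) ω‖ ^ 2 ∂μ = σ_h2 * ∫ ω, ‖A i ω‖ ^ 2 ∂μ := by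
      rw [← hEh2 i]; exact (hW i).2
    have h2 : ‖a (some i)‖ ^ 2 = m_h ^ 2 * ‖g‖ ^ 2 := by
      simp only [a, Option.elim]
      rw [norm_smul, mul_pow, Real.norm_eq_abs, sq_abs]
    rw [h1, h2]
    have := mul_le_mul_of_nonneg_left (hVA i) hσh
    linarith
  have hb' := Finset.sum_le_sum (s := Finset.univ) fun i _ => hb i
  rw [Finset.sum_const, Finset.card_univ, Fintype.card_fin, nsmul_eq_mul] at hb'
  have hn' : ∫ ω, ‖otaY h X n none ω‖ ^ 2 ∂μ - ‖a none‖ ^ 2 ≤ σbar2 := by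
    simpa [otaY, a] using hVn
  have e : ∀ ω, ‖(1 / (m_h * (N : ℝ))) • v ω - g‖ ^ 2
      = (1 / (m_h * (N : ℝ))) ^ 2 * ‖v ω - (m_h * (N : ℝ)) • g‖ ^ 2 := fun ω => by
    have : (1 / (m_h * (N : ℝ))) • v ω - g
        = (1 / (m_h * (N : ℝ))) • (v ω - (m_h * (N : ℝ)) • g) := by
      rw [smul_sub, smul_smul, one_div, inv_mul_cancel₀ (by positivity), one_smul]
    rw [this, norm_smul, mul_pow, Real.norm_eq_abs, sq_abs]
  simp_rw [e]
  rw [integral_const_mul, hcen]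
  calc _ ≤ (1 / (m_h * (N : ℝ))) ^ 2 * (σbar2 +
        N * (σ_h2 * ((V ^ 2 - ‖g‖ ^ 2) / M + ‖g‖ ^ 2) - m_h ^ 2 * ‖g‖ ^ 2)) := by gcongr
    _ = _ := by field_simp; ring
end

section
/- (One-step expected descent of over-the-air federated policy gradient.) In the over-the-air federated PG model, if 0 < α ≤ 1/(m_h·L), then for every k ≥ 0, E[J(θ^{k+1})] − E[J(θ^k)] ≤ (α·((M−1)·σ_h² − M·(N+1)·m_h²)/(2·M·N·m_h))·E[‖∇J(θ^k)‖²] + α·σ̄²/(2·m_h·N²) + α·σ_h²·V²/(2·M·N·m_h). -/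
open MeasureTheory ProbabilityTheory Gradient

lemma ota_descent {E : Type*} [NormedAddCommGroup E] [InnerProductSpace ℝ E] [CompleteSpace E]
    {L : ℝ} {J : E → ℝ} (hJ : Differentiable ℝ J)
    (hLip : ∀ x y, ‖gradient J x - gradient J y‖ ≤ L * ‖x - y‖) (x y : E) :
    J (x + y) ≤ J x + inner ℝ (gradient J x) y + L / 2 * ‖y‖ ^ 2 := by
  let φ : ℝ → ℝ := fun t => J (x + t • y) - t * inner ℝ (gradient J x) y - L / 2 * t ^ 2 * ‖y‖ ^ 2
  have hd : ∀ t, HasDerivAt φ (inner ℝ (gradient J (x + t • y)) y - inner ℝ (gradient J x) y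
      - L * t * ‖y‖ ^ 2) t := by
    intro t
    have h1 : HasDerivAt (fun t : ℝ => x + t • y) y t := by
      simpa using ((hasDerivAt_id t).smul_const y).const_add x
    have h2 := (hJ (x + t • y)).hasGradientAt.hasFDerivAt.comp_hasDerivAt t h1
    have h3 := (hasDerivAt_id t).mul_const (inner ℝ (gradient J x) y)
    have h4 := ((hasDerivAt_pow 2 t).const_mul (L / 2)).mul_const (‖y‖ ^ 2)
    have := (h2.sub h3).sub h4
    refine this.congr_deriv ?_
    rw [InnerProductSpace.toDual_apply_apply]
    push_cast
    ring
  have hanti : AntitoneOn φ (Set.Icc 0 1) := by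
    apply antitoneOn_of_deriv_nonpos (convex_Icc 0 1)
    · exact fun t _ => (hd t).continuousAt.continuousWithinAt
    · exact fun t _ => (hd t).differentiableAt.differentiableWithinAt
    · intro t ht
      rw [interior_Icc] at ht
      rw [(hd t).deriv, ← inner_sub_left]
      have h1 := real_inner_le_norm (gradient J (x + t • y) - gradient J x) y
      have h2 := hLip (x + t • y) x
      rw [add_sub_cancel_left, norm_smul, Real.norm_of_nonneg ht.1.le] at h2
      have := mul_le_mul_of_nonneg_right h2 (norm_nonneg y)
      nlinarith
  have := hanti (by simp) (by simp) (zero_le_one' ℝ)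
  simp only [φ, one_smul, zero_smul, add_zero] at this
  linarith

lemma ota_ae_iIndepFun {ι α Ω β : Type*} [Finite ι] {mα : MeasurableSpace α}
    {mΩ : MeasurableSpace Ω} [mβ : MeasurableSpace β] [MeasurableSpace.CountablyGenerated β]
    {κ : Kernel α Ω} [IsMarkovKernel κ] {μ : Measure α}
    {f : ι → Ω → β} (hf : ∀ i, Measurable (f i)) (hind : Kernel.iIndepFun f κ μ) :
    ∀ᵐ a ∂μ, iIndepFun f (κ a) := by
  let U : ℕ → Set β := MeasurableSpace.natGeneratingSequence β
  let P : Finset ℕ → Set β := fun t => ⋂ n ∈ t, U n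
  have hU : ∀ n, MeasurableSet (U n) := MeasurableSpace.measurableSet_natGeneratingSequence
  have hP : ∀ t, MeasurableSet (P t) := fun t => t.measurableSet_biInter fun n _ => hU n
  have hgen : mβ = MeasurableSpace.generateFrom (Set.range P) := by
    apply le_antisymm
    · conv_lhs => rw [← MeasurableSpace.generateFrom_natGeneratingSequence β]
      apply MeasurableSpace.generateFrom_mono
      rintro _ ⟨n, rfl⟩
      exact ⟨{n}, by simp [P, U]⟩
    · apply MeasurableSpace.generateFrom_le
      rintro _ ⟨t, rfl⟩
      exact hP t
  have hpi : IsPiSystem (Set.range P) := by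
    rintro _ ⟨s, rfl⟩ _ ⟨t, rfl⟩ -
    refine ⟨s ∪ t, ?_⟩
    simp only [P]
    ext x
    simp only [Set.mem_iInter, Finset.mem_union, Set.mem_inter_iff]
    exact ⟨fun h => ⟨fun n hn => h n (Or.inl hn), fun n hn => h n (Or.inr hn)⟩,
      fun h n hn => hn.elim (h.1 n) (h.2 n)⟩
  have key : ∀ᵐ a ∂μ, ∀ (s : Finset ι) (c : ι → Finset ℕ),
      κ a (⋂ i ∈ s, f i ⁻¹' P (c i)) = ∏ i ∈ s, κ a (f i ⁻¹' P (c i)) := by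
    rw [ae_all_iff]; intro s
    rw [ae_all_iff]; intro c
    exact (Kernel.iIndepFun_iff_measure_inter_preimage_eq_mul _ _).1 hind s (fun i _ => hP (c i))
  filter_upwards [key] with a ha
  rw [iIndepFun_iff_iIndep]
  refine iIndepSets.iIndep (fun i => (hf i).comap_le)
    (fun i => Set.preimage (f i) '' Set.range P) ?_ ?_ ?_
  · intro i
    have := hpi.comap (f i)
    convert this using 1
    ext s; simp
  · intro i
    conv_lhs => rw [hgen]
    rw [MeasurableSpace.comap_generateFrom]
  · rw [iIndepSets_iff]
    intro s g hg
    have : ∀ i, ∃ t, i ∈ s → g i = f i ⁻¹' P t := by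
      intro i
      by_cases hi : i ∈ s
      · obtain ⟨_, ⟨t, rfl⟩, h⟩ := hg i hi
        exact ⟨t, fun _ => h.symm⟩
      · exact ⟨∅, fun h => absurd h hi⟩
    choose c hc using this
    have e1 : (⋂ i ∈ s, g i) = ⋂ i ∈ s, f i ⁻¹' P (c i) := Set.iInter₂_congr fun i hi => hc i hi
    rw [e1, ha s c]
    exact Finset.prod_congr rfl fun i hi => by rw [hc i hi]

lemma ota_integrable_inner {Ω E : Type*} [MeasurableSpace Ω] {μ : Measure Ω}
    [NormedAddCommGroup E] [InnerProductSpace ℝ E] {f g : Ω → E}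
    (hf : MemLp f 2 μ) (hg : MemLp g 2 μ) : Integrable (fun ω => inner ℝ (f ω) (g ω)) μ := by
  refine (hf.norm.integrable_mul hg.norm).mono' (hf.1.inner hg.1) (ae_of_all _ fun ω => ?_)
  exact norm_inner_le_norm _ _

lemma otaFam_measurable {d N M : ℕ} {Ω : Type*} [MeasurableSpace Ω]
    {h : Fin N → Ω → ℝ} {X : Fin N → Fin M → Ω → EuclideanSpace ℝ (Fin d)}
    {n : Ω → EuclideanSpace ℝ (Fin d)}
    (hhm : ∀ i, Measurable (h i)) (hXm : ∀ i m, Measurable (X i m)) (hnm : Measurable n) :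
    ∀ a, Measurable (otaFam h X n a)
  | Sum.inl i => (hhm i).prodMk measurable_const
  | Sum.inr (Sum.inl (i, m)) => measurable_const.prodMk (hXm i m)
  | Sum.inr (Sum.inr _) => measurable_const.prodMk hnm

lemma ota_sum_K (N M : ℕ) (a b c : ℝ) :
    ∑ p : Fin N × Fin M, ∑ q : Fin N × Fin M,
      ((if p.1 = q.1 then a else 0) + b + (if p = q then c else 0))
      = N * M ^ 2 * a + N ^ 2 * M ^ 2 * b + N * M * c := by
  simp only [Finset.sum_add_distrib]
  congr 1
  · congr 1
    · obtain ⟨F, hF⟩ : ∃ F : Fin N → Fin N → ℝ, F = fun i j => if i = j then a else 0 := ⟨_, rfl⟩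
      have e : ∀ p q : Fin N × Fin M, (if p.1 = q.1 then a else 0) = F p.1 q.1 := by
        intro p q
        rw [hF]
      simp only [e, Fintype.sum_prod_type]
      rw [hF]
      simp only [Finset.sum_const, Finset.card_univ, Fintype.card_fin,
        nsmul_eq_mul, ← Finset.mul_sum, Finset.sum_ite_eq, Finset.mem_univ, if_true]
      ring
    · simp
      ring
  · simp

/-- The computation under a single probability measure. -/
lemma ota_plain {d N M : ℕ} (hN : 0 < N) (hM : 0 < M) {Ω : Type*} [MeasurableSpace Ω]
    {ν : Measure Ω} [IsProbabilityMeasure ν]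
    {h : Fin N → Ω → ℝ} {X : Fin N → Fin M → Ω → EuclideanSpace ℝ (Fin d)}
    {n : Ω → EuclideanSpace ℝ (Fin d)}
    (hhm : ∀ i, Measurable (h i)) (hXm : ∀ i m, Measurable (X i m)) (hnm : Measurable n)
    (hind : iIndepFun (otaFam h X n) ν)
    (hh2 : ∀ i, MemLp (h i) 2 ν) (hX2 : ∀ i m, MemLp (X i m) 2 ν) (hn2 : MemLp n 2 ν)
    {a σ V2 s : ℝ} {g : EuclideanSpace ℝ (Fin d)}
    (hEh : ∀ i, ∫ ω, h i ω ∂ν = a) (hEh2 : ∀ i, ∫ ω, (h i ω) ^ 2 ∂ν = σ)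
    (hEX : ∀ i m, ∫ ω, X i m ω ∂ν = g) (hEX2 : ∀ i m, ∫ ω, ‖X i m ω‖ ^ 2 ∂ν ≤ V2)
    (hEn : ∫ ω, n ω ∂ν = 0) (hEn2 : ∫ ω, ‖n ω‖ ^ 2 ∂ν = s)
    {v : Ω → EuclideanSpace ℝ (Fin d)}
    (hv : v = fun ω => (∑ i : Fin N, h i ω • ((1 / (M : ℝ)) • ∑ m : Fin M, X i m ω)) + n ω) :
    MemLp v 2 ν ∧ ∫ ω, v ω ∂ν = (N * a) • g ∧
    ∫ ω, ‖v ω‖ ^ 2 ∂ν ≤ s + N * σ * V2 / M + (N * σ * (M - 1) / M + N * (N - 1) * a ^ 2) * ‖g‖ ^ 2 ∧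
    ‖g‖ ^ 2 ≤ V2 := by
  have hMr : (0 : ℝ) < M := by exact_mod_cast hM
  have hNr : (0 : ℝ) < N := by exact_mod_cast hN
  have hfm := otaFam_measurable hhm hXm hnm
  have hσ : 0 ≤ σ := by rw [← hEh2 ⟨0, hN⟩]; positivity
  -- independence facts
  have indHX : ∀ i (p : Fin N × Fin M), IndepFun (h i) (X p.1 p.2) ν := fun i p =>
    (hind.indepFun (i := Sum.inl i) (j := Sum.inr (Sum.inl p)) (by simp)).comp
      measurable_fst measurable_snd
  have indXX : ∀ p q : Fin N × Fin M, p ≠ q → IndepFun (X p.1 p.2) (X q.1 q.2) ν := fun p q hpq =>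
    (hind.indepFun (i := Sum.inr (Sum.inl p)) (j := Sum.inr (Sum.inl q)) (by simpa using hpq)).comp
      measurable_snd measurable_snd
  have indHH : ∀ i j : Fin N, i ≠ j → IndepFun (h i) (h j) ν := fun i j hij =>
    (hind.indepFun (i := Sum.inl i) (j := Sum.inl j) (by simpa using hij)).comp
      measurable_fst measurable_fst
  have indHHXX : ∀ (i j : Fin N) (p q : Fin N × Fin M),
      IndepFun (fun ω => h i ω * h j ω) (fun ω => inner ℝ (X p.1 p.2 ω) (X q.1 q.2 ω)) ν :=
    fun i j p q =>
    (hind.indepFun_prodMk_prodMk hfm (Sum.inl i) (Sum.inl j) (Sum.inr (Sum.inl p))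
      (Sum.inr (Sum.inl q)) (by simp) (by simp) (by simp) (by simp)).comp
      (φ := fun z : ((ℝ × EuclideanSpace ℝ (Fin d)) × (ℝ × EuclideanSpace ℝ (Fin d))) => z.1.1 * z.2.1)
      (ψ := fun z : ((ℝ × EuclideanSpace ℝ (Fin d)) × (ℝ × EuclideanSpace ℝ (Fin d))) =>
        inner ℝ z.1.2 z.2.2)
      (by fun_prop) (by fun_prop)
  have indHXn : ∀ (i : Fin N) (p : Fin N × Fin M),
      IndepFun (fun ω => h i ω • X p.1 p.2 ω) n ν :=
    fun i p =>
    (hind.indepFun_prodMk hfm (Sum.inl i) (Sum.inr (Sum.inl p)) (Sum.inr (Sum.inr ()))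
      (by simp) (by simp)).comp
      (φ := fun z : ((ℝ × EuclideanSpace ℝ (Fin d)) × (ℝ × EuclideanSpace ℝ (Fin d))) => z.1.1 • z.2.2)
      (ψ := fun z : ℝ × EuclideanSpace ℝ (Fin d) => z.2)
      (by fun_prop) (by fun_prop)
  obtain ⟨W, hW⟩ : ∃ W : Fin N × Fin M → Ω → EuclideanSpace ℝ (Fin d),
      W = fun p ω => h p.1 ω • X p.1 p.2 ω := ⟨_, rfl⟩
  have hW2 : ∀ p, MemLp (W p) 2 ν := by
    intro p
    have hm : Measurable (W p) := by
      rw [hW]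
      exact (hhm p.1).smul (hXm p.1 p.2)
    rw [memLp_two_iff_integrable_sq_norm hm.aestronglyMeasurable]
    have h1 := (memLp_two_iff_integrable_sq_norm (hh2 p.1).1).1 (hh2 p.1)
    have h2 := (memLp_two_iff_integrable_sq_norm (hX2 p.1 p.2).1).1 (hX2 p.1 p.2)
    have h3 := ((indHX p.1 p).comp (φ := fun x => ‖x‖ ^ 2) (ψ := fun x => ‖x‖ ^ 2)
      (by fun_prop) (by fun_prop)).integrable_mul h1 h2
    refine h3.congr (ae_of_all _ fun ω => ?_)
    simp [hW, norm_smul, mul_pow]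
  have hvW : v = fun ω => (1 / (M : ℝ)) • (∑ p, W p ω) + n ω := by
    rw [hv]
    funext ω
    congr 1
    rw [Fintype.sum_prod_type, Finset.smul_sum]
    refine Finset.sum_congr rfl fun i _ => ?_
    simp only [hW]
    rw [← Finset.smul_sum, smul_comm]
  have hS2 : MemLp (fun ω => ∑ p, W p ω) 2 ν := memLp_finsetSum _ fun p _ => hW2 p
  have hv2 : MemLp v 2 ν := by
    rw [hvW]
    have := (hS2.const_smul (1 / (M : ℝ))).add hn2
    exact this
  have hWint : ∀ p, ∫ ω, W p ω ∂ν = a • g := by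
    intro p
    simp only [hW]
    rw [(indHX p.1 p).integral_fun_smul_eq_smul_integral (hh2 _).1 (hX2 _ _).1, hEh, hEX]
  have hXint : ∀ p : Fin N × Fin M, Integrable (X p.1 p.2) ν :=
    fun p => (hX2 _ _).integrable one_le_two
  have hWI : ∀ p, Integrable (W p) ν := fun p => (hW2 p).integrable one_le_two
  have hnI : Integrable n ν := hn2.integrable one_le_two
  have hg2 : ‖g‖ ^ 2 ≤ V2 := by
    let i : Fin N := ⟨0, hN⟩
    let m : Fin M := ⟨0, hM⟩
    have e : ∀ ω, ‖X i m ω - g‖ ^ 2 = ‖X i m ω‖ ^ 2 - 2 * inner ℝ g (X i m ω) + ‖g‖ ^ 2 := by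
      intro ω
      rw [norm_sub_sq_real, real_inner_comm]
    have h0 : 0 ≤ ∫ ω, ‖X i m ω - g‖ ^ 2 ∂ν := integral_nonneg fun ω => by positivity
    simp_rw [e] at h0
    have i1 := (memLp_two_iff_integrable_sq_norm (hX2 i m).1).1 (hX2 i m)
    have i2 : Integrable (fun ω => 2 * inner ℝ g (X i m ω)) ν :=
      ((hXint (i, m)).const_inner g).const_mul 2
    have i12 : Integrable (fun ω => ‖X i m ω‖ ^ 2 - 2 * inner ℝ g (X i m ω)) ν := i1.sub i2
    rw [integral_add i12 (integrable_const _), integral_sub i1 i2,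
      integral_const_mul, integral_inner (hXint (i, m)), hEX, real_inner_self_eq_norm_sq] at h0
    have := hEX2 i m
    simp at h0
    linarith
  refine ⟨hv2, ?_, ?_, hg2⟩
  · have i0 : Integrable (fun ω => (1 / (M : ℝ)) • ∑ p, W p ω) ν :=
      (hS2.integrable one_le_two).smul (1 / (M : ℝ))
    simp only [hvW]
    rw [integral_add i0 hnI, hEn, integral_smul,
      integral_finsetSum _ fun p _ => hWI p]
    simp_rw [hWint]
    simp only [Finset.sum_const, Finset.card_univ, Fintype.card_prod, Fintype.card_fin, add_zero,
      ← Nat.cast_smul_eq_nsmul ℝ, smul_smul]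
    congr 1
    push_cast
    field_simp
  · have e : ∀ ω, ‖v ω‖ ^ 2 = (1 / (M : ℝ)) ^ 2 * (∑ p, ∑ q, inner ℝ (W p ω) (W q ω))
        + (2 / M) * (∑ p, inner ℝ (W p ω) (n ω)) + ‖n ω‖ ^ 2 := by
      intro ω
      rw [hvW]
      simp only
      rw [norm_add_sq_real, norm_smul, mul_pow, ← real_inner_self_eq_norm_sq (∑ p, W p ω),
        sum_inner, real_inner_smul_left, sum_inner]
      simp_rw [inner_sum]
      simp
      ring
    have hWW : ∀ p q, Integrable (fun ω => inner ℝ (W p ω) (W q ω)) ν :=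
      fun p q => ota_integrable_inner (hW2 p) (hW2 q)
    have hWn : ∀ p, Integrable (fun ω => inner ℝ (W p ω) (n ω)) ν :=
      fun p => ota_integrable_inner (hW2 p) hn2
    have hWnI : ∀ p, ∫ ω, inner ℝ (W p ω) (n ω) ∂ν = 0 := by
      intro p
      have hi : IndepFun (W p) n ν := by
        rw [hW]
        exact indHXn p.1 p
      have := hi.integral_bilin (hWI p) hnI (innerSL ℝ)
      change ∫ ω, inner ℝ (W p ω) (n ω) ∂ν = inner ℝ (∫ ω, W p ω ∂ν) (∫ ω, n ω ∂ν) at this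
      rw [this, hEn, inner_zero_right]
    have hK : ∀ p q, ∫ ω, inner ℝ (W p ω) (W q ω) ∂ν ≤
        (if p.1 = q.1 then (σ - a ^ 2) * ‖g‖ ^ 2 else 0) + a ^ 2 * ‖g‖ ^ 2
          + (if p = q then σ * (V2 - ‖g‖ ^ 2) else 0) := by
      intro p q
      have e1 : ∀ ω, inner ℝ (W p ω) (W q ω) =
          (h p.1 ω * h q.1 ω) * inner ℝ (X p.1 p.2 ω) (X q.1 q.2 ω) := by
        intro ω
        simp only [hW, real_inner_smul_left, real_inner_smul_right]
        ring
      simp_rw [e1]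
      rw [(indHHXX p.1 q.1 p q).integral_fun_mul_eq_mul_integral
        ((hhm _).mul (hhm _)).aestronglyMeasurable
        ((hXm _ _).inner (hXm _ _)).aestronglyMeasurable]
      have eH : p.1 = q.1 → ∫ ω, h p.1 ω * h q.1 ω ∂ν = σ := by
        intro hpq
        rw [← hpq, ← hEh2 p.1]
        simp_rw [sq]
      have eH' : p.1 ≠ q.1 → ∫ ω, h p.1 ω * h q.1 ω ∂ν = a ^ 2 := by
        intro hpq
        rw [(indHH _ _ hpq).integral_fun_mul_eq_mul_integral (hh2 _).1 (hh2 _).1, hEh, hEh, sq]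
      have eX : p ≠ q → ∫ ω, inner ℝ (X p.1 p.2 ω) (X q.1 q.2 ω) ∂ν = ‖g‖ ^ 2 := by
        intro hpq
        have := (indXX p q hpq).integral_bilin (hXint p) (hXint q) (innerSL ℝ)
        change ∫ ω, inner ℝ (X p.1 p.2 ω) (X q.1 q.2 ω) ∂ν =
          inner ℝ (∫ ω, X p.1 p.2 ω ∂ν) (∫ ω, X q.1 q.2 ω ∂ν) at this
        rw [this, hEX, hEX, real_inner_self_eq_norm_sq]
      by_cases hpq : p = q
      · subst hpq
        rw [eH rfl]
        simp only [real_inner_self_eq_norm_sq, if_true]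
        have := mul_le_mul_of_nonneg_left (hEX2 p.1 p.2) hσ
        linarith
      · rw [eX hpq]
        by_cases h1 : p.1 = q.1
        · rw [eH h1, if_pos h1, if_neg hpq]
          linarith
        · rw [eH' h1, if_neg h1, if_neg hpq]
          linarith
    have hn2I := (memLp_two_iff_integrable_sq_norm hn2.1).1 hn2
    have i1 : Integrable (fun ω => (1 / (M : ℝ)) ^ 2 * (∑ p, ∑ q, inner ℝ (W p ω) (W q ω))) ν :=
      (integrable_finsetSum _ fun p _ => integrable_finsetSum _ fun q _ => hWW p q).const_mul _
    have i2 : Integrable (fun ω => (2 / (M : ℝ)) * (∑ p, inner ℝ (W p ω) (n ω))) ν :=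
      (integrable_finsetSum _ fun p _ => hWn p).const_mul _
    simp_rw [e]
    have i12 : Integrable (fun ω => (1 / (M : ℝ)) ^ 2 * (∑ p, ∑ q, inner ℝ (W p ω) (W q ω))
        + (2 / (M : ℝ)) * (∑ p, inner ℝ (W p ω) (n ω))) ν := i1.add i2
    rw [integral_add i12 hn2I, integral_add i1 i2, integral_const_mul, integral_const_mul,
      integral_finsetSum _ (fun p _ => integrable_finsetSum _ fun q _ => hWW p q),
      integral_finsetSum _ (fun p _ => hWn p)]
    simp_rw [hWnI]
    have e3 : ∀ p, ∫ ω, ∑ q, inner ℝ (W p ω) (W q ω) ∂ν = ∑ q, ∫ ω, inner ℝ (W p ω) (W q ω) ∂ν :=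
      fun p => integral_finsetSum _ fun q _ => hWW p q
    simp_rw [e3]
    have hsum := Finset.sum_le_sum fun p (_ : p ∈ Finset.univ) =>
      Finset.sum_le_sum fun q (_ : q ∈ Finset.univ) => hK p q
    rw [ota_sum_K] at hsum
    have := mul_le_mul_of_nonneg_left hsum (by positivity : (0:ℝ) ≤ (1 / (M : ℝ)) ^ 2)
    have e4 : (1 / (M : ℝ)) ^ 2 * (↑N * ↑M ^ 2 * ((σ - a ^ 2) * ‖g‖ ^ 2)
        + ↑N ^ 2 * ↑M ^ 2 * (a ^ 2 * ‖g‖ ^ 2) + ↑N * ↑M * (σ * (V2 - ‖g‖ ^ 2))) =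
        N * σ * V2 / M + (N * σ * (M - 1) / M + N * (N - 1) * a ^ 2) * ‖g‖ ^ 2 := by
      field_simp
      ring
    rw [e4] at this
    simp only [Finset.sum_const_zero, mul_zero, add_zero, hEn2]
    linarith

set_option maxHeartbeats 1000000 in
/-- Conditional version, with measurable data. -/
lemma ota_cond {d N M : ℕ} (hN : 0 < N) (hM : 0 < M)
    {Ω : Type*} {m : MeasurableSpace Ω} [mΩ : MeasurableSpace Ω] [StandardBorelSpace Ω]
    {μ : Measure Ω} [IsProbabilityMeasure μ] (hm : m ≤ mΩ)
    {h : Fin N → Ω → ℝ} {X : Fin N → Fin M → Ω → EuclideanSpace ℝ (Fin d)}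
    {n : Ω → EuclideanSpace ℝ (Fin d)}
    (hhm : ∀ i, Measurable (h i)) (hXm : ∀ i m, Measurable (X i m)) (hnm : Measurable n)
    (hind : iCondIndepFun m hm (otaFam h X n) μ)
    (hh2 : ∀ i, MemLp (h i) 2 μ) (hX2 : ∀ i m, MemLp (X i m) 2 μ) (hn2 : MemLp n 2 μ)
    (hhind : ∀ i, Indep (MeasurableSpace.comap (h i) inferInstance) m μ)
    (hnind : Indep (MeasurableSpace.comap n inferInstance) m μ)
    {a σ V s : ℝ} (hσ : 0 ≤ σ) {g : Ω → EuclideanSpace ℝ (Fin d)}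
    (hEh : ∀ i, ∫ ω, h i ω ∂μ = a) (hEh2 : ∀ i, ∫ ω, (h i ω) ^ 2 ∂μ = σ)
    (hEX : ∀ i j, μ[X i j | m] =ᵐ[μ] g)
    (hEX2 : ∀ i j, ∀ᵐ ω ∂μ, (μ[fun ω' => ‖X i j ω'‖ ^ 2 | m]) ω ≤ V ^ 2)
    (hEn : ∫ ω, n ω ∂μ = 0) (hEn2 : ∫ ω, ‖n ω‖ ^ 2 ∂μ ≤ s)
    {v : Ω → EuclideanSpace ℝ (Fin d)}
    (hv : v = fun ω => (∑ i : Fin N, h i ω • ((1 / (M : ℝ)) • ∑ m : Fin M, X i m ω)) + n ω) :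
    MemLp v 2 μ ∧ (μ[v | m] =ᵐ[μ] fun ω => (N * a) • g ω) ∧
    ∫ ω, ‖v ω‖ ^ 2 ∂μ ≤ s + N * σ * V ^ 2 / M
      + (N * σ * (M - 1) / M + N * (N - 1) * a ^ 2) * ∫ ω, ‖g ω‖ ^ 2 ∂μ ∧
    ∀ᵐ ω ∂μ, ‖g ω‖ ^ 2 ≤ V ^ 2 := by
  have hMr : (1 : ℝ) ≤ M := by exact_mod_cast hM
  have hNr : (1 : ℝ) ≤ N := by exact_mod_cast hN
  have sqL : ∀ {F : Type} [NormedAddCommGroup F] {f : Ω → F}, MemLp f 2 μ →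
      Integrable (fun ω => ‖f ω‖ ^ 2) μ := fun hf => (memLp_two_iff_integrable_sq_norm hf.1).1 hf
  have kL : ∀ {F : Type} [NormedAddCommGroup F] {f : Ω → F}, StronglyMeasurable f → MemLp f 2 μ →
      ∀ᵐ ω ∂μ, MemLp f 2 (condExpKernel μ m ω) := by
    intro F _ f hfm hf
    filter_upwards [(sqL hf).condExpKernel_ae (m := m)] with ω hω
    exact (memLp_two_iff_integrable_sq_norm hfm.aestronglyMeasurable).2 hω
  have kE : ∀ {F : Type} [NormedAddCommGroup F] [NormedSpace ℝ F] [CompleteSpace F] {f : Ω → F},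
      Integrable f μ →
      ∀ᵐ ω ∂μ, ∫ y, f y ∂(condExpKernel μ m ω) = (μ[f | m]) ω := by
    intro F _ _ _ f hf
    filter_upwards [condExp_ae_eq_integral_condExpKernel hm hf] with ω hω using hω.symm
  have hcI : ∀ᵐ ω ∂μ, iIndepFun (otaFam h X n) (condExpKernel μ m ω) :=
    ae_of_ae_trim hm (ota_ae_iIndepFun (otaFam_measurable hhm hXm hnm) hind)
  have c1 : ∀ᵐ ω ∂μ, ∀ i, ∫ y, h i y ∂(condExpKernel μ m ω) = a := by
    rw [ae_all_iff]; intro i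
    filter_upwards [kE ((hh2 i).integrable one_le_two),
      condExp_indep_eq (hhm i).comap_le hm (comap_measurable (h i)).stronglyMeasurable (hhind i)]
      with ω h1 h2
    rw [h1, h2, hEh]
  have c2 : ∀ᵐ ω ∂μ, ∀ i, ∫ y, h i y ^ 2 ∂(condExpKernel μ m ω) = σ := by
    rw [ae_all_iff]; intro i
    filter_upwards [kE ((hh2 i).integrable_sq),
      condExp_indep_eq (f := fun y => h i y ^ 2) (hhm i).comap_le hm
        ((comap_measurable (h i)).pow_const 2).stronglyMeasurable (hhind i)]
      with ω h1 h2
    rw [h1, h2, hEh2]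
  have c3 : ∀ᵐ ω ∂μ, ∫ y, n y ∂(condExpKernel μ m ω) = 0 := by
    filter_upwards [kE (hn2.integrable one_le_two),
      condExp_indep_eq hnm.comap_le hm (comap_measurable n).stronglyMeasurable hnind]
      with ω h1 h2
    rw [h1, h2, hEn]
  have c4 : ∀ᵐ ω ∂μ, ∫ y, ‖n y‖ ^ 2 ∂(condExpKernel μ m ω) = ∫ ω, ‖n ω‖ ^ 2 ∂μ := by
    filter_upwards [kE (sqL hn2),
      condExp_indep_eq (f := fun y => ‖n y‖ ^ 2) hnm.comap_le hm
        ((measurable_norm.pow_const 2).comp (comap_measurable n)).stronglyMeasurable hnind]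
      with ω h1 h2
    rw [h1, h2]
  have c5 : ∀ᵐ ω ∂μ, ∀ i j, ∫ y, X i j y ∂(condExpKernel μ m ω) = g ω := by
    rw [ae_all_iff]; intro i
    rw [ae_all_iff]; intro j
    filter_upwards [kE ((hX2 i j).integrable one_le_two), hEX i j] with ω h1 h2
    rw [h1, h2]
  have c6 : ∀ᵐ ω ∂μ, ∀ i j, ∫ y, ‖X i j y‖ ^ 2 ∂(condExpKernel μ m ω) ≤ V ^ 2 := by
    rw [ae_all_iff]; intro i
    rw [ae_all_iff]; intro j
    filter_upwards [kE (sqL (hX2 i j)), hEX2 i j] with ω h1 h2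
    rw [h1]; exact h2
  have c7 : ∀ᵐ ω ∂μ, ∀ i, MemLp (h i) 2 (condExpKernel μ m ω) := by
    rw [ae_all_iff]; intro i
    exact kL (hhm i).stronglyMeasurable (hh2 i)
  have c8 : ∀ᵐ ω ∂μ, ∀ i j, MemLp (X i j) 2 (condExpKernel μ m ω) := by
    rw [ae_all_iff]; intro i
    rw [ae_all_iff]; intro j
    exact kL (hXm i j).stronglyMeasurable (hX2 i j)
  have c9 := kL hnm.stronglyMeasurable hn2
  have main : ∀ᵐ ω ∂μ, MemLp v 2 (condExpKernel μ m ω) ∧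
      ∫ y, v y ∂(condExpKernel μ m ω) = (N * a) • g ω ∧
      ∫ y, ‖v y‖ ^ 2 ∂(condExpKernel μ m ω) ≤ (∫ ω, ‖n ω‖ ^ 2 ∂μ) + N * σ * V ^ 2 / M
        + (N * σ * (M - 1) / M + N * (N - 1) * a ^ 2) * ‖g ω‖ ^ 2 ∧
      ‖g ω‖ ^ 2 ≤ V ^ 2 := by
    filter_upwards [hcI, c1, c2, c3, c4, c5, c6, c7, c8, c9] with
      ω hcI c1 c2 c3 c4 c5 c6 c7 c8 c9
    exact ota_plain hN hM hhm hXm hnm hcI c7 c8 c9 c1 c2 c5 c6 c3 c4 hv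
  have hvm : Measurable v := by
    rw [hv]
    fun_prop
  have hC : 0 ≤ N * σ * (M - 1) / M + N * (N - 1) * a ^ 2 := by
    have h1 : (0 : ℝ) ≤ M - 1 := by linarith
    have h2 : (0 : ℝ) ≤ N - 1 := by linarith
    positivity
  have hgm : AEStronglyMeasurable g μ :=
    (integrable_condExp (m := m) (μ := μ)
      (f := X ⟨0, hN⟩ ⟨0, hM⟩)).aestronglyMeasurable.congr (hEX _ _)
  have hgI : Integrable (fun ω => ‖g ω‖ ^ 2) μ := by
    refine (integrable_const (V ^ 2)).mono' (hgm.norm.pow 2) ?_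
    filter_upwards [main] with ω hω
    rw [Real.norm_of_nonneg (by positivity)]
    exact hω.2.2.2
  have hbm : AEStronglyMeasurable (fun ω => ∫ y, ‖v y‖ ^ 2 ∂(condExpKernel μ m ω)) μ :=
    AEStronglyMeasurable.integral_condExpKernel
      (hvm.norm.pow_const 2).stronglyMeasurable.aestronglyMeasurable
  have hrI : Integrable (fun ω => (∫ ω, ‖n ω‖ ^ 2 ∂μ) + N * σ * V ^ 2 / M
        + (N * σ * (M - 1) / M + N * (N - 1) * a ^ 2) * ‖g ω‖ ^ 2) μ :=
    (integrable_const _).add (hgI.const_mul _)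
  have hbI : Integrable (fun ω => ∫ y, ‖v y‖ ^ 2 ∂(condExpKernel μ m ω)) μ := by
    refine hrI.mono' hbm ?_
    filter_upwards [main] with ω hω
    rw [Real.norm_of_nonneg (integral_nonneg fun _ => by positivity)]
    exact hω.2.2.1
  have hvsq : Integrable (fun ω => ‖v ω‖ ^ 2) μ := by
    have hsm : StronglyMeasurable (fun ω => ‖v ω‖ ^ 2) := (hvm.norm.pow_const 2).stronglyMeasurable
    rw [← condExpKernel_comp_trim (μ := μ) hm, Measure.integrable_comp_iff hsm.aestronglyMeasurable]
    constructor
    · have hms : MeasurableSet[m] {ω | Integrable (fun ω => ‖v ω‖ ^ 2) (condExpKernel μ m ω)} :=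
        measurableSet_kernel_integrable (hsm.comp_measurable measurable_snd)
      rw [ae_iff, ← Set.compl_ofPred, trim_measurableSet_eq hm hms.compl]
      change ∀ᵐ ω ∂μ, Integrable (fun ω => ‖v ω‖ ^ 2) (condExpKernel μ m ω)
      filter_upwards [main] with ω hω
      exact (memLp_two_iff_integrable_sq_norm hvm.aestronglyMeasurable).1 hω.1
    · refine Integrable.trim hm ?_ hsm.norm.integral_condExpKernel
      simpa using hbI
  have hv2 : MemLp v 2 μ := (memLp_two_iff_integrable_sq_norm hvm.aestronglyMeasurable).2 hvsq
  refine ⟨hv2, ?_, ?_, ?_⟩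
  · filter_upwards [kE (hv2.integrable one_le_two), main] with ω h1 h2
    rw [← h1, h2.2.1]
  · rw [← integral_condExp hm, integral_congr_ae (condExp_ae_eq_integral_condExpKernel hm hvsq)]
    calc _ ≤ ∫ ω, ((∫ ω, ‖n ω‖ ^ 2 ∂μ) + N * σ * V ^ 2 / M
        + (N * σ * (M - 1) / M + N * (N - 1) * a ^ 2) * ‖g ω‖ ^ 2) ∂μ := by
          refine integral_mono_ae hbI hrI ?_
          filter_upwards [main] with ω hω using hω.2.2.1
      _ ≤ _ := by
          rw [integral_add (integrable_const _) (hgI.const_mul _), integral_const_mul]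
          simp only [integral_const, probReal_univ, one_smul]
          linarith
  · filter_upwards [main] with ω hω using hω.2.2.2

lemma ota_indep_congr {Ω β : Type*} {m : MeasurableSpace Ω} [mΩ : MeasurableSpace Ω]
    [mβ : MeasurableSpace β] {μ : Measure Ω} {f f' : Ω → β} (hff : f =ᵐ[μ] f')
    (hi : Indep (MeasurableSpace.comap f mβ) m μ) : Indep (MeasurableSpace.comap f' mβ) m μ := by
  rw [Indep_iff] at hi ⊢
  rintro _ t2 ⟨s, hs, rfl⟩ ht2
  have h1 : (f' ⁻¹' s : Set Ω) =ᵐ[μ] (f ⁻¹' s : Set Ω) := by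
    filter_upwards [hff] with ω hω
    change (f' ω ∈ s) = (f ω ∈ s)
    rw [hω]
  rw [measure_congr h1, measure_congr (h1.inter (ae_eq_refl t2))]
  exact hi _ _ ⟨s, hs, rfl⟩ ht2

set_option maxHeartbeats 1000000 in
/-- Conditional version, with almost everywhere measurable data. -/
lemma ota_cond' {d N M : ℕ} (hN : 0 < N) (hM : 0 < M)
    {Ω : Type*} {m : MeasurableSpace Ω} [mΩ : MeasurableSpace Ω] [StandardBorelSpace Ω]
    {μ : Measure Ω} [IsProbabilityMeasure μ] (hm : m ≤ mΩ)
    {h : Fin N → Ω → ℝ} {X : Fin N → Fin M → Ω → EuclideanSpace ℝ (Fin d)}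
    {n : Ω → EuclideanSpace ℝ (Fin d)}
    (hind : iCondIndepFun m hm (otaFam h X n) μ)
    (hh2 : ∀ i, MemLp (h i) 2 μ) (hX2 : ∀ i m, MemLp (X i m) 2 μ) (hn2 : MemLp n 2 μ)
    (hhind : ∀ i, Indep (MeasurableSpace.comap (h i) inferInstance) m μ)
    (hnind : Indep (MeasurableSpace.comap n inferInstance) m μ)
    {a σ V s : ℝ} (hσ : 0 ≤ σ) {g : Ω → EuclideanSpace ℝ (Fin d)}
    (hEh : ∀ i, ∫ ω, h i ω ∂μ = a) (hEh2 : ∀ i, ∫ ω, (h i ω) ^ 2 ∂μ = σ)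
    (hEX : ∀ i j, μ[X i j | m] =ᵐ[μ] g)
    (hEX2 : ∀ i j, ∀ᵐ ω ∂μ, (μ[fun ω' => ‖X i j ω'‖ ^ 2 | m]) ω ≤ V ^ 2)
    (hEn : ∫ ω, n ω ∂μ = 0) (hEn2 : ∫ ω, ‖n ω‖ ^ 2 ∂μ ≤ s)
    {v : Ω → EuclideanSpace ℝ (Fin d)}
    (hv : v = fun ω => (∑ i : Fin N, h i ω • ((1 / (M : ℝ)) • ∑ m : Fin M, X i m ω)) + n ω) :
    MemLp v 2 μ ∧ (μ[v | m] =ᵐ[μ] fun ω => (N * a) • g ω) ∧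
    ∫ ω, ‖v ω‖ ^ 2 ∂μ ≤ s + N * σ * V ^ 2 / M
      + (N * σ * (M - 1) / M + N * (N - 1) * a ^ 2) * ∫ ω, ‖g ω‖ ^ 2 ∂μ ∧
    ∀ᵐ ω ∂μ, ‖g ω‖ ^ 2 ≤ V ^ 2 := by
  have hh : ∀ i, ∃ h', Measurable h' ∧ h i =ᵐ[μ] h' := fun i => (hh2 i).1.aemeasurable
  have hX : ∀ i j, ∃ X', Measurable X' ∧ X i j =ᵐ[μ] X' := fun i j => (hX2 i j).1.aemeasurable
  obtain ⟨n', hn'm, hn'⟩ : ∃ n', Measurable n' ∧ n =ᵐ[μ] n' := hn2.1.aemeasurable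
  choose h' hh'm hh' using hh
  choose X' hX'm hX' using hX
  have hind' : iCondIndepFun m hm (otaFam h' X' n') μ := by
    refine Kernel.iIndepFun.congr' hind fun i => Measure.ae_ae_of_ae_comp ?_
    rw [condExpKernel_comp_trim hm]
    rcases i with i | ⟨i, j⟩ | u
    · filter_upwards [hh' i] with ω hω
      simp [otaFam, hω]
    · filter_upwards [hX' i j] with ω hω
      simp [otaFam, hω]
    · filter_upwards [hn'] with ω hω
      simp [otaFam, hω]
  have hvv : v =ᵐ[μ] fun ω =>
      (∑ i : Fin N, h' i ω • ((1 / (M : ℝ)) • ∑ m : Fin M, X' i m ω)) + n' ω := by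
    have e1 := ae_all_iff.2 hh'
    have e2 := ae_all_iff.2 fun i => ae_all_iff.2 (hX' i)
    filter_upwards [e1, e2, hn'] with ω h1 h2 h3
    rw [hv]
    simp only [h1, h2, h3]
  obtain ⟨r1, r2, r3, r4⟩ := ota_cond (V := V) (s := s) (σ := σ) (a := a) (g := g)
    hN hM hm hh'm hX'm hn'm hind' (fun i => (hh2 i).ae_eq (hh' i))
    (fun i j => (hX2 i j).ae_eq (hX' i j)) (hn2.ae_eq hn')
    (fun i => ota_indep_congr (hh' i) (hhind i)) (ota_indep_congr hn' hnind) hσ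
    (fun i => by rw [← hEh i]; exact integral_congr_ae (hh' i).symm)
    (fun i => by
      rw [← hEh2 i]
      refine integral_congr_ae ?_
      filter_upwards [hh' i] with ω hω
      rw [hω])
    (fun i j => (condExp_congr_ae (hX' i j).symm).trans (hEX i j))
    (fun i j => by
      have : (fun ω => ‖X' i j ω‖ ^ 2) =ᵐ[μ] fun ω => ‖X i j ω‖ ^ 2 := by
        filter_upwards [hX' i j] with ω hω
        rw [hω]
      filter_upwards [condExp_congr_ae (m := m) this, hEX2 i j] with ω h1 h2
      rw [h1]; exact h2)
    (by rw [← hEn]; exact integral_congr_ae hn'.symm)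
    (by
      refine le_of_eq_of_le (integral_congr_ae ?_) hEn2
      filter_upwards [hn'] with ω hω
      rw [hω])
    rfl
  refine ⟨r1.ae_eq hvv.symm, (condExp_congr_ae hvv).trans r2, ?_, r4⟩
  refine le_of_eq_of_le (integral_congr_ae ?_) r3
  filter_upwards [hvv] with ω hω
  rw [hω]

/-- one-step expected descent of over-the-air federated policy gradient.
In the over-the-air federated PG model, if `0 < α ≤ 1/(m_h L)`, then for every `k ≥ 0`,
`E[J(θ^{k+1})] - E[J(θ^k)] ≤ (α((M-1)σ_h² - M(N+1)m_h²)/(2 M N m_h)) E[‖∇J(θ^k)‖²]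
  + α σ̄²/(2 m_h N²) + α σ_h² V²/(2 M N m_h)`. -/
theorem overTheAir_one_step_descent
    {d : ℕ} (hd : 1 ≤ d) {N M : ℕ} (hN : 0 < N) (hM : 0 < M)
    {Ω : Type*} [mΩ : MeasurableSpace Ω] [StandardBorelSpace Ω] [Nonempty Ω]
    (μ : Measure Ω) [IsProbabilityMeasure μ]
    (m_h σ_h2 V σbar2 α L : ℝ)
    (hm : 0 < m_h) (hσh : 0 ≤ σ_h2) (hV : 0 ≤ V) (hσbar : 0 ≤ σbar2)
    (hL : 0 < L) (hα : 0 < α) (hαL : α ≤ 1 / (m_h * L))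
    (J : EuclideanSpace ℝ (Fin d) → ℝ) (hJ : Differentiable ℝ J)
    (hLip : ∀ x y : EuclideanSpace ℝ (Fin d),
      ‖gradient J x - gradient J y‖ ≤ L * ‖x - y‖)
    (Jstar : ℝ) (hJstar : IsGLB (Set.range J) Jstar)
    (𝓕 : Filtration ℕ mΩ)
    (h : ℕ → Fin N → Ω → ℝ)
    (X : ℕ → Fin N → Fin M → Ω → EuclideanSpace ℝ (Fin d))
    (n : ℕ → Ω → EuclideanSpace ℝ (Fin d))
    (θ : ℕ → Ω → EuclideanSpace ℝ (Fin d))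
    (θ0 : EuclideanSpace ℝ (Fin d)) (hθ0 : θ 0 = fun _ => θ0)
    (v : ℕ → Ω → EuclideanSpace ℝ (Fin d))
    (hv : ∀ k, v k = fun ω =>
      (∑ i : Fin N, h k i ω • ((1 / (M : ℝ)) • ∑ m : Fin M, X k i m ω)) + n k ω)
    (hθ : ∀ k, θ (k + 1) = fun ω => θ k ω - (α / (N : ℝ)) • v k ω)
    (hθmeas : ∀ k, Measurable[𝓕 k] (θ k))
    (hh2 : ∀ k i, MemLp (h k i) 2 μ)
    (hX2 : ∀ k i m, MemLp (X k i m) 2 μ)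
    (hn2 : ∀ k, MemLp (n k) 2 μ)
    (hcondind : ∀ k, iCondIndepFun (𝓕 k) (𝓕.le k)
      (otaFam (h k) (X k) (n k)) μ)
    (hhind : ∀ k i, Indep (MeasurableSpace.comap (h k i) inferInstance) (𝓕 k) μ)
    (hnind : ∀ k, Indep (MeasurableSpace.comap (n k) inferInstance) (𝓕 k) μ)
    (hEh : ∀ k i, ∫ ω, h k i ω ∂μ = m_h)
    (hEh2 : ∀ k i, ∫ ω, (h k i ω) ^ 2 ∂μ = σ_h2)
    (hEn : ∀ k, ∫ ω, n k ω ∂μ = 0)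
    (hVn : ∀ k, ∫ ω, ‖n k ω‖ ^ 2 ∂μ ≤ σbar2)
    (hEX : ∀ k i m, μ[X k i m | 𝓕 k] =ᵐ[μ] fun ω => gradient J (θ k ω))
    (hVX : ∀ k i m, ∀ᵐ ω ∂μ, (μ[fun ω' => ‖X k i m ω'‖ ^ 2 | 𝓕 k]) ω ≤ V ^ 2) :
    ∀ k : ℕ,
      (∫ ω, J (θ (k + 1) ω) ∂μ) - ∫ ω, J (θ k ω) ∂μ ≤
        (α * (((M : ℝ) - 1) * σ_h2 - (M : ℝ) * ((N : ℝ) + 1) * m_h ^ 2)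
            / (2 * (M : ℝ) * (N : ℝ) * m_h)) * ∫ ω, ‖gradient J (θ k ω)‖ ^ 2 ∂μ
          + α * σbar2 / (2 * m_h * (N : ℝ) ^ 2)
          + α * σ_h2 * V ^ 2 / (2 * (M : ℝ) * (N : ℝ) * m_h) := by
  have hMr : (0 : ℝ) < M := by exact_mod_cast hM
  have hNr : (0 : ℝ) < N := by exact_mod_cast hN
  have S := fun k => ota_cond' (V := V) hN hM (𝓕.le k) (hcondind k) (hh2 k) (hX2 k) (hn2 k)
    (hhind k) (hnind k) hσh (hEh k) (hEh2 k) (hEX k) (hVX k) (hEn k) (hVn k) (hv k)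
  have hgc : Continuous (gradient J) := by
    have : LipschitzWith (Real.toNNReal L) (gradient J) := by
      refine LipschitzWith.of_dist_le_mul fun x y => ?_
      rw [dist_eq_norm, dist_eq_norm, Real.coe_toNNReal _ hL.le]
      exact hLip x y
    exact this.continuous
  have hθm : ∀ k, Measurable (θ k) := fun k => (hθmeas k).mono (𝓕.le k) le_rfl
  have hgm : ∀ k, StronglyMeasurable[𝓕 k] (fun ω => gradient J (θ k ω)) := fun k =>
    (hgc.measurable.comp (hθmeas k)).stronglyMeasurable
  have hg2 : ∀ k, MemLp (fun ω => gradient J (θ k ω)) 2 μ := by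
    intro k
    refine MemLp.of_bound ((hgm k).mono (𝓕.le k)).aestronglyMeasurable V ?_
    filter_upwards [(S k).2.2.2] with ω hω
    exact abs_le_of_sq_le_sq' hω hV |>.2
  have hgv : ∀ k, Integrable (fun ω => inner ℝ (gradient J (θ k ω)) (v k ω)) μ :=
    fun k => ota_integrable_inner (hg2 k) (S k).1
  have hvsq : ∀ k, Integrable (fun ω => ‖v k ω‖ ^ 2) μ :=
    fun k => (memLp_two_iff_integrable_sq_norm (S k).1.1).1 (S k).1
  have hgvI : ∀ k, ∫ ω, inner ℝ (gradient J (θ k ω)) (v k ω) ∂μ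
      = N * m_h * ∫ ω, ‖gradient J (θ k ω)‖ ^ 2 ∂μ := by
    intro k
    have h1 := condExp_bilin_of_stronglyMeasurable_left (innerSL ℝ) (hgm k) (hgv k)
      ((S k).1.integrable one_le_two)
    rw [← integral_condExp (𝓕.le k), ← integral_const_mul]
    refine integral_congr_ae ?_
    filter_upwards [h1, (S k).2.1] with ω h1 h2
    refine Eq.trans h1 ?_
    change inner ℝ (gradient J (θ k ω)) ((μ[v k | 𝓕 k]) ω) = _
    rw [h2, real_inner_smul_right, real_inner_self_eq_norm_sq]
  have hdesc : ∀ k ω, J (θ (k + 1) ω) ≤ J (θ k ω)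
      - α / N * inner ℝ (gradient J (θ k ω)) (v k ω) + L * α ^ 2 / (2 * N ^ 2) * ‖v k ω‖ ^ 2 := by
    intro k ω
    have := ota_descent hJ hLip (θ k ω) (-((α / (N : ℝ)) • v k ω))
    rw [inner_neg_right, real_inner_smul_right, norm_neg, norm_smul, mul_pow, ← sub_eq_add_neg,
      Real.norm_eq_abs, sq_abs] at this
    rw [hθ k]
    refine this.trans (le_of_eq ?_)
    field_simp
    ring
  have hJm : ∀ k, Measurable fun ω => J (θ k ω) := fun k => hJ.continuous.measurable.comp (hθm k)
  have hrhs : ∀ k, Integrable (fun ω => J (θ k ω)) μ → Integrable (fun ω => J (θ k ω)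
      - α / N * inner ℝ (gradient J (θ k ω)) (v k ω) + L * α ^ 2 / (2 * N ^ 2) * ‖v k ω‖ ^ 2) μ :=
    fun k hk => (hk.sub ((hgv k).const_mul _)).add ((hvsq k).const_mul _)
  have hJI : ∀ k, Integrable (fun ω => J (θ k ω)) μ := by
    intro k
    induction k with
    | zero =>
      rw [hθ0]
      exact integrable_const _
    | succ k ih =>
      refine integrable_of_le_of_le (hJm (k + 1)).aestronglyMeasurable
        (ae_of_all _ fun ω => hJstar.1 ⟨_, rfl⟩) (ae_of_all _ (hdesc k))
        (integrable_const Jstar) (hrhs k ih)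
  intro k
  have h1 := integral_mono (hJI (k + 1)) (hrhs k (hJI k)) (hdesc k)
  have i1 : Integrable (fun ω => J (θ k ω)
      - α / N * inner ℝ (gradient J (θ k ω)) (v k ω)) μ := (hJI k).sub ((hgv k).const_mul _)
  rw [integral_add i1 ((hvsq k).const_mul _), integral_sub (hJI k) ((hgv k).const_mul _),
    integral_const_mul, integral_const_mul, hgvI k] at h1
  have h2 := (S k).2.2.1
  have hc : L * α ^ 2 / (2 * N ^ 2) ≤ α / (2 * m_h * N ^ 2) := by
    rw [le_div_iff₀ (by positivity)] at hαL
    rw [div_le_div_iff₀ (by positivity) (by positivity)]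
    have := mul_le_mul_of_nonneg_left hαL (by positivity : (0:ℝ) ≤ 2 * N ^ 2 * α)
    nlinarith
  have h0 : 0 ≤ ∫ ω, ‖v k ω‖ ^ 2 ∂μ := integral_nonneg fun _ => by positivity
  have h3 := mul_le_mul_of_nonneg_right hc h0
  have h4 := mul_le_mul_of_nonneg_left h2 (by positivity : 0 ≤ α / (2 * m_h * N ^ 2))
  generalize (∫ ω, ‖gradient J (θ k ω)‖ ^ 2 ∂μ) = G at *
  have h5 : -(α / N * (N * m_h * G)) + α / (2 * m_h * N ^ 2) * (σbar2 + N * σ_h2 * V ^ 2 / M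
      + (N * σ_h2 * (M - 1) / M + N * (N - 1) * m_h ^ 2) * G) =
      (α * (((M : ℝ) - 1) * σ_h2 - (M : ℝ) * ((N : ℝ) + 1) * m_h ^ 2)
            / (2 * (M : ℝ) * (N : ℝ) * m_h)) * G
          + α * σbar2 / (2 * m_h * (N : ℝ) ^ 2)
          + α * σ_h2 * V ^ 2 / (2 * (M : ℝ) * (N : ℝ) * m_h) := by
    field_simp
    ring
  linarith
end
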